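/- arXiv:2209.00986 — 2 statements merged into one kernel-verified Lean document; each statement's English description precedes it below -/
import Mathlib

section
/- Let G be a finite group. Then: (i) for every subgroup H ≤ G, tp(G) ≤ tp(H); (ii) for every normal subgroup N ⊴ G, tp(G) ≤ tp(G/N); (iii) for every section X of G (i.e. X ≅ H/N with N ⊴ H ≤ G), tp(G) ≤ tp(X). -/
/-!
Both inequalities come from comparing `P_G(K)` with the probability of a single related subgroup.

For `K ≤ H ≤ G`, a common transversal `T` of `K` in `G` is determined by `T ∩ H`, a common
transversal of `K` in `H`, together with one element of `K` for each left coset of `K` outside `H`.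
Hence `|DT_G(K)| ≤ |DT_H(K)| |K| ^ ((G:K) - (H:K))`, that is `P_G(K) ≤ P_H(K)`
(`transProb_map_le`).

For `N ⊴ G` and `N ≤ K ≤ G`, a common transversal of `K` in `G` is determined by its image in
`G/N`, a common transversal of `K/N`, together with one element of `N` for each coset of `K`.
Hence `|DT_G(K)| ≤ |DT_{G/N}(K/N)| |N| ^ (G:K)`, and `|K| = |K/N| |N|` gives
`P_G(K) ≤ P_{G/N}(K/N)` (`transProb_comap_le`).

The claim on sections is the composite of the two.
-/

open scoped Pointwise Classical

/-- `T` is simultaneously a left transversal for `H` (each left coset `gH` contains exactly one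
element of `T`) and a right transversal for `K` (each right coset `Kg` contains exactly one
element of `T`). -/
def IsDoubleTransversal {G : Type*} [Group G] (H K : Subgroup G) (T : Set G) : Prop :=
  (∀ g : G, ∃! t : G, t ∈ T ∧ g⁻¹ * t ∈ H) ∧ (∀ g : G, ∃! t : G, t ∈ T ∧ t * g⁻¹ ∈ K)

/-- `|DT_G(H,K)|`: the number of common transversals for the pair `(H, K)`. -/
noncomputable def numDT {G : Type*} [Group G] (H K : Subgroup G) : ℕ :=
  Nat.card {T : Set G // IsDoubleTransversal H K T}

/-- `P_G(H,K) = |DT_G(H,K)| / |H| ^ (G:H)`, the common transversal probability. -/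
noncomputable def transProb {G : Type*} [Group G] (H K : Subgroup G) : ℚ :=
  (numDT H K : ℚ) / (Nat.card H : ℚ) ^ H.index

/-- `tp(G)`: the minimum of `P_G(H) = P_G(H,H)` over all subgroups `H ≤ G`. -/
noncomputable def tp (G : Type*) [Group G] [Finite G] : ℚ :=
  haveI : Finite (Subgroup G) :=
    Finite.of_injective (fun H : Subgroup G => (H : Set G)) SetLike.coe_injective
  haveI : Fintype (Subgroup G) := Fintype.ofFinite _
  Finset.univ.inf' Finset.univ_nonempty (fun H : Subgroup G => transProb H H)

theorem tp_le_transProb {G : Type*} [Group G] [Finite G] (H : Subgroup G) :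
    tp G ≤ transProb H H := by
  unfold tp
  letI : Fintype (Subgroup G) := Fintype.ofFinite _
  exact Finset.inf'_le (fun H : Subgroup G => transProb H H) (Finset.mem_univ H)

theorem tp_le_tp_of_forall {G X : Type*} [Group G] [Finite G] [Group X] [Finite X]
    (h : ∀ K : Subgroup X, ∃ K' : Subgroup G, transProb K' K' ≤ transProb K K) :
    tp G ≤ tp X := by
  conv_rhs => unfold tp
  refine Finset.le_inf' _ _ fun K _ => ?_
  obtain ⟨K', hK'⟩ := h K
  exact (tp_le_transProb K').trans hK'

/-- The representative in `T` of the left coset `q` of `H`. -/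
noncomputable def cosetRep {G : Type*} [Group G] {H K : Subgroup G}
    (T : {T : Set G // IsDoubleTransversal H K T}) (q : G ⧸ H) : G :=
  (T.2.1 q.out).choose

theorem cosetRep_mem {G : Type*} [Group G] {H K : Subgroup G}
    (T : {T : Set G // IsDoubleTransversal H K T}) (q : G ⧸ H) : cosetRep T q ∈ T.1 :=
  (T.2.1 q.out).choose_spec.1.1

theorem mk_cosetRep {G : Type*} [Group G] {H K : Subgroup G}
    (T : {T : Set G // IsDoubleTransversal H K T}) (q : G ⧸ H) :
    ((cosetRep T q : G) : G ⧸ H) = q := by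
  have h := (T.2.1 q.out).choose_spec.1.2
  rw [← QuotientGroup.eq, QuotientGroup.out_eq'] at h
  exact h.symm

theorem out_inv_mul_cosetRep_mem {G : Type*} [Group G] {H K : Subgroup G}
    (T : {T : Set G // IsDoubleTransversal H K T}) (q : G ⧸ H) :
    q.out⁻¹ * cosetRep T q ∈ H :=
  (T.2.1 q.out).choose_spec.1.2

theorem eq_of_mem_of_mk_eq {G : Type*} [Group G] {H K : Subgroup G} {T : Set G}
    (hT : IsDoubleTransversal H K T) {s t : G} (hs : s ∈ T) (ht : t ∈ T)
    (h : (s : G ⧸ H) = t) : s = t :=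
  (hT.1 s).unique ⟨hs, by simp⟩ ⟨ht, QuotientGroup.eq.1 h⟩

theorem cosetRep_mk {G : Type*} [Group G] {H K : Subgroup G}
    (T : {T : Set G // IsDoubleTransversal H K T}) {t : G} (ht : t ∈ T.1) :
    cosetRep T (t : G ⧸ H) = t :=
  eq_of_mem_of_mk_eq T.2 (cosetRep_mem T _) ht (mk_cosetRep T _)

/-! ### Subgroups -/

theorem IsDoubleTransversal.preimage_subtype {G : Type*} [Group G] {H : Subgroup G}
    {K : Subgroup H} {T : Set G}
    (hT : IsDoubleTransversal (K.map H.subtype) (K.map H.subtype) T) :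
    IsDoubleTransversal K K ((↑) ⁻¹' T : Set H) := by
  have hle : K.map H.subtype ≤ H := Subgroup.map_subtype_le K
  have hmem : ∀ x : H, (x : G) ∈ K.map H.subtype ↔ x ∈ K := fun x =>
    Subgroup.mem_map_iff_mem (f := H.subtype) H.subtype_injective
  constructor
  · intro g
    obtain ⟨t, ⟨htT, htK⟩, hu⟩ := hT.1 g
    have htH : t ∈ H := by
      simpa using H.mul_mem g.2 (hle htK)
    refine ⟨⟨t, htH⟩, ⟨htT, (hmem _).1 htK⟩, ?_⟩
    rintro s ⟨hsT, hsK⟩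
    exact Subtype.ext (hu s ⟨hsT, (hmem _).2 hsK⟩)
  · intro g
    obtain ⟨t, ⟨htT, htK⟩, hu⟩ := hT.2 g
    have htH : t ∈ H := by
      simpa using H.mul_mem (hle htK) g.2
    refine ⟨⟨t, htH⟩, ⟨htT, (hmem _).1 htK⟩, ?_⟩
    rintro s ⟨hsT, hsK⟩
    exact Subtype.ext (hu s ⟨hsT, (hmem _).2 hsK⟩)

/-- The embedding of the left cosets of `K` in `H` into the left cosets of `K` in `G`. -/
def cosetIncl {G : Type*} [Group G] {H : Subgroup G} (K : Subgroup H) :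
    H ⧸ K → G ⧸ K.map H.subtype :=
  Quotient.map' (fun x : H => (x : G)) (fun a b h => by
    rw [QuotientGroup.leftRel_apply] at h ⊢
    exact ⟨_, h, by simp⟩)

theorem cosetIncl_injective {G : Type*} [Group G] {H : Subgroup G} (K : Subgroup H) :
    Function.Injective (cosetIncl K) := by
  intro p q
  induction p using QuotientGroup.induction_on with | H a => ?_
  induction q using QuotientGroup.induction_on with | H b => ?_
  intro h
  have h' : ((a : G) : G ⧸ K.map H.subtype) = ((b : G) : G ⧸ K.map H.subtype) := h
  rw [QuotientGroup.eq] at h'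
  rw [QuotientGroup.eq]
  exact (Subgroup.mem_map_iff_mem (f := H.subtype) (x := a⁻¹ * b) H.subtype_injective).1 h'

theorem mem_of_mk_mem_range_cosetIncl {G : Type*} [Group G] {H : Subgroup G} (K : Subgroup H)
    {t : G} (h : ∃ p, cosetIncl K p = (t : G ⧸ K.map H.subtype)) : t ∈ H := by
  obtain ⟨p, hp⟩ := h
  induction p using QuotientGroup.induction_on with | H a => ?_
  have h' : ((a : G) : G ⧸ K.map H.subtype) = t := hp
  rw [QuotientGroup.eq] at h'
  simpa using H.mul_mem a.2 (Subgroup.map_subtype_le K h')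

/-- The factor `|K| ^ (H:K)` on the left pays for the cosets inside `H`, where the second
component of the injection is free; this avoids the exponent `(G:K) - (H:K)`. -/
theorem numDT_map_mul_le {G : Type*} [Group G] [Finite G] {H : Subgroup G} (K : Subgroup H) :
    numDT (K.map H.subtype) (K.map H.subtype) * Nat.card (K.map H.subtype) ^ K.index ≤
      numDT K K * Nat.card (K.map H.subtype) ^ (K.map H.subtype).index := by
  let M := K.map H.subtype
  let D := {T : Set G // IsDoubleTransversal M M T}
  let F : D × (H ⧸ K → M) → {T : Set H // IsDoubleTransversal K K T} × (G ⧸ M → M) :=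
    fun x => (⟨_, x.1.2.preimage_subtype⟩, Function.extend (cosetIncl K) x.2
      fun q => ⟨_, out_inv_mul_cosetRep_mem x.1 q⟩)
  have key : ∀ x y : D × (H ⧸ K → M), F x = F y → x.1.1 ⊆ y.1.1 := by
    intro x y hxy t ht
    obtain ⟨h1, h2⟩ := Prod.ext_iff.1 hxy
    by_cases htH : t ∈ H
    · have h3 : ((↑) ⁻¹' x.1.1 : Set H) = (↑) ⁻¹' y.1.1 := congrArg Subtype.val h1
      have : (⟨t, htH⟩ : H) ∈ ((↑) ⁻¹' x.1.1 : Set H) := ht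
      rw [h3] at this
      exact this
    · have hn : ¬ ∃ p, cosetIncl K p = (t : G ⧸ M) :=
        fun h => htH (mem_of_mk_mem_range_cosetIncl K h)
      have h3 := congrFun h2 (t : G ⧸ M)
      simp only [F, Function.extend_apply' _ _ _ hn, Subtype.mk.injEq] at h3
      rw [mul_right_inj, cosetRep_mk _ ht] at h3
      rw [h3]
      exact cosetRep_mem _ _
  have hF : Function.Injective F := by
    intro x y hxy
    refine Prod.ext (Subtype.ext ((key x y hxy).antisymm (key y x hxy.symm))) ?_
    funext p
    have h3 := congrFun (Prod.ext_iff.1 hxy).2 (cosetIncl K p)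
    simpa only [F, (cosetIncl_injective K).extend_apply] using h3
  have h := Nat.card_le_card_of_injective F hF
  simpa only [Nat.card_prod, Nat.card_fun, numDT, Subgroup.index] using h

theorem transProb_map_le {G : Type*} [Group G] [Finite G] {H : Subgroup G} (K : Subgroup H) :
    transProb (K.map H.subtype) (K.map H.subtype) ≤ transProb K K := by
  have hc : Nat.card (K.map H.subtype) = Nat.card K :=
    Subgroup.card_map_of_injective H.subtype_injective
  have h := numDT_map_mul_le K
  have hpos : (0 : ℚ) < Nat.card K := by exact_mod_cast Nat.card_pos
  unfold transProb
  rw [hc] at h ⊢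
  rw [div_le_div_iff₀ (by positivity) (by positivity)]
  exact_mod_cast h

/-! ### Quotients -/

theorem IsDoubleTransversal.image_mk {G : Type*} [Group G] {N : Subgroup G} [N.Normal]
    {K : Subgroup (G ⧸ N)} {T : Set G}
    (hT : IsDoubleTransversal (K.comap (QuotientGroup.mk' N)) (K.comap (QuotientGroup.mk' N)) T) :
    IsDoubleTransversal K K (QuotientGroup.mk' N '' T) := by
  constructor
  · intro g
    obtain ⟨g, rfl⟩ := QuotientGroup.mk'_surjective N g
    obtain ⟨t, ⟨htT, htK⟩, hu⟩ := hT.1 g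
    refine ⟨QuotientGroup.mk' N t, ⟨⟨t, htT, rfl⟩, by simpa using htK⟩, ?_⟩
    rintro _ ⟨⟨s, hsT, rfl⟩, hsK⟩
    rw [hu s ⟨hsT, by simpa using hsK⟩]
  · intro g
    obtain ⟨g, rfl⟩ := QuotientGroup.mk'_surjective N g
    obtain ⟨t, ⟨htT, htK⟩, hu⟩ := hT.2 g
    refine ⟨QuotientGroup.mk' N t, ⟨⟨t, htT, rfl⟩, by simpa [div_eq_mul_inv] using htK⟩, ?_⟩
    rintro _ ⟨⟨s, hsT, rfl⟩, hsK⟩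
    rw [hu s ⟨hsT, by simpa [div_eq_mul_inv] using hsK⟩]

theorem numDT_comap_le {G : Type*} [Group G] [Finite G] (N : Subgroup G) [N.Normal]
    (K : Subgroup (G ⧸ N)) :
    numDT (K.comap (QuotientGroup.mk' N)) (K.comap (QuotientGroup.mk' N)) ≤
      numDT K K * Nat.card N ^ (K.comap (QuotientGroup.mk' N)).index := by
  let M := K.comap (QuotientGroup.mk' N)
  let D := {T : Set G // IsDoubleTransversal M M T}
  have hN : ∀ t : G, (t : G ⧸ N).out⁻¹ * t ∈ N := fun t => by
    rw [← QuotientGroup.eq, QuotientGroup.out_eq']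
  let F : D → {T : Set (G ⧸ N) // IsDoubleTransversal K K T} × (G ⧸ M → N) :=
    fun T => (⟨_, T.2.image_mk⟩, fun q => ⟨_, hN (cosetRep T q)⟩)
  have key : ∀ S T : D, F S = F T → S.1 ⊆ T.1 := by
    intro S T hST t ht
    obtain ⟨h1, h2⟩ := Prod.ext_iff.1 hST
    have h3 : QuotientGroup.mk' N '' S.1 = QuotientGroup.mk' N '' T.1 := congrArg Subtype.val h1
    obtain ⟨s, hsT, hs⟩ := h3 ▸ Set.mem_image_of_mem (QuotientGroup.mk' N) ht
    -- `s` and `t` agree modulo `N`, hence modulo `M`, so they represent the same coset of `M`.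
    have hM : (s : G ⧸ M) = t := by
      rw [QuotientGroup.eq]
      have : QuotientGroup.mk' N (s⁻¹ * t) = 1 := by rw [map_mul, map_inv, hs, inv_mul_cancel]
      change QuotientGroup.mk' N (s⁻¹ * t) ∈ K
      rw [this]
      exact K.one_mem
    have h4 := congrFun h2 (t : G ⧸ M)
    simp only [F, Subtype.mk.injEq] at h4
    rw [cosetRep_mk S ht, ← hM, cosetRep_mk T hsT] at h4
    have hs' : (s : G ⧸ N) = t := hs
    rw [hs', mul_right_inj] at h4
    exact h4 ▸ hsT
  have hF : Function.Injective F := fun S T h =>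
    Subtype.ext ((key S T h).antisymm (key T S h.symm))
  have h := Nat.card_le_card_of_injective F hF
  simpa only [Nat.card_prod, Nat.card_fun, numDT, Subgroup.index] using h

theorem transProb_comap_le {G : Type*} [Group G] [Finite G] (N : Subgroup G) [N.Normal]
    (K : Subgroup (G ⧸ N)) :
    transProb (K.comap (QuotientGroup.mk' N)) (K.comap (QuotientGroup.mk' N)) ≤
      transProb K K := by
  have hi : (K.comap (QuotientGroup.mk' N)).index = K.index :=
    K.index_comap_of_surjective (QuotientGroup.mk'_surjective N)
  have hc : Nat.card (K.comap (QuotientGroup.mk' N)) = Nat.card K * Nat.card N := by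
    have h1 := (K.comap (QuotientGroup.mk' N)).card_mul_index
    have h2 := K.card_mul_index
    have h3 : Nat.card G = Nat.card (G ⧸ N) * Nat.card N :=
      N.card_eq_card_quotient_mul_card_subgroup
    rw [hi] at h1
    refine Nat.eq_of_mul_eq_mul_right (Nat.pos_of_ne_zero K.index_ne_zero_of_finite) ?_
    rw [h1, h3, ← h2]
    ring
  have h := numDT_comap_le N K
  have hK : (0 : ℚ) < Nat.card K := by exact_mod_cast Nat.card_pos
  have hN : (0 : ℚ) < Nat.card N := by exact_mod_cast Nat.card_pos
  unfold transProb
  rw [hi] at h ⊢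
  rw [hc, Nat.cast_mul, div_le_div_iff₀ (by positivity) (by positivity)]
  have h' : (numDT (K.comap (QuotientGroup.mk' N)) (K.comap (QuotientGroup.mk' N)) : ℚ) ≤
      numDT K K * (Nat.card N : ℚ) ^ K.index := by exact_mod_cast h
  calc _ ≤ numDT K K * (Nat.card N : ℚ) ^ K.index * (Nat.card K : ℚ) ^ K.index := by gcongr
    _ = _ := by ring

theorem tp_le_tp_subgroup {G : Type*} [Group G] [Finite G] (H : Subgroup G) : tp G ≤ tp H :=
  tp_le_tp_of_forall fun K => ⟨_, transProb_map_le K⟩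

theorem tp_le_tp_quotient {G : Type*} [Group G] [Finite G] (N : Subgroup G) [N.Normal] :
    tp G ≤ tp (G ⧸ N) :=
  tp_le_tp_of_forall fun K => ⟨_, transProb_comap_le N K⟩

theorem stmt12 (G : Type*) [Group G] [Finite G] :
    (∀ H : Subgroup G, tp G ≤ tp H) ∧
    (∀ (N : Subgroup G) [N.Normal], tp G ≤ tp (G ⧸ N)) ∧
    (∀ (H : Subgroup G) (N : Subgroup H) [N.Normal], tp G ≤ tp (H ⧸ N)) := by
  exact ⟨fun H => tp_le_tp_subgroup H, fun N _ => tp_le_tp_quotient N,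
    fun H N _ => (tp_le_tp_subgroup H).trans (tp_le_tp_quotient N)⟩
end

section
/- Let G be a finite group with tp(G) > (1/2)^{40}. Then G is soluble or G has a section isomorphic to the alternating group A_5, i.e. there exist subgroups N ⊴ H ≤ G with H/N ≅ A_5. -/
open scoped Pointwise Classical

/-- `G` has a section isomorphic to `X`: there are subgroups `N ⊴ H ≤ G` with `H/N ≅ X`,
equivalently (as formalized here) some subgroup of `G` admits a surjective homomorphism
onto `X`. -/
def HasSectionIsomorphicTo (G : Type*) [Group G] (X : Type*) [Group X] : Prop :=
  ∃ (H : Subgroup G) (φ : H →* X), Function.Surjective φ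

/-!
Let `H ≤ G`. A common transversal `T` for `H` induces the permutation `tH ↦ t⁻¹H` of `G ⧸ H`, any
two such permutations differ by one preserving all `H`-orbits, and once the permutation is known
the element of `T` in a given left coset ranges over at most one coset of a point stabiliser.
Counting gives `P_G(H) ≤ ∏ m! / m ^ m` over the `H`-orbits on `G ⧸ H`, where `m` is the size of the
orbit (`transProb_le`). The assumption that all these products exceed `2⁻⁴⁰` (`TransversalRich`)
passes to subgroups and quotients, so induction on the order reduces the claim to a nonsolvable
simple group `G`.

For a subgroup `H` of prime order `p` with normaliser `N`, the orbits have size `1` or `p`, which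
gives `|G| = |N| + k * p ^ 2` with `k * (p - 1) < 40` (`TransversalRich.prime_bound`). Take `p` to
be the least prime divisor of `|G|`.

* If `p ≥ 7`, then `k < p` is coprime to `|N|`, so `|N|` divides `p ^ 2`; both `|N| = p` and
  `|N| = p ^ 2` are impossible (`minFac_lt_seven`).
* If `p = 3` or `p = 5`, then `|N| * p ≤ |G|` gives `|G| < 300`. If `p = 2`, then `2 * |G|` divides
  the factorial of the index of `N`, so that this index is at least `5` or `|G| ≤ 12`; hence
  `|G| < 200`. Sylow's theorems, the embedding of `G` in the alternating group on the Sylow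
  subgroups and Burnside's transfer theorem rule out all these orders except `60`, `120`, `168`
  and `180` (`sylow_constraint`, `even_orders`, `odd_orders`).
* Order `120` would give a subgroup of index three in `A₆`. For orders `168` and `180` the
  bound is applied again, to a central involution of a Sylow `2`-subgroup. In order `60` there are
  five Sylow `2`-subgroups, and the action on them is an isomorphism onto `A₅`.
-/

open MulAction

/-! ### Common transversals and orbit products -/

/-- The product of `m! / m ^ m` over the `A`-orbits on `X`, where `m` is the size of the orbit
(for finite `X`; the finite product defaults to `1` if infinitely many factors differ from `1`). -/
noncomputable def orbitProd (A X : Type*) [Group A] [MulAction A X] : ℚ :=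
  ∏ᶠ ω : orbitRel.Quotient A X,
    ((Nat.card ω.orbit).factorial : ℚ) / (Nat.card ω.orbit : ℚ) ^ Nat.card ω.orbit

/-- The elements `g` with `gH` and `g⁻¹H` prescribed form at most one coset of a point
stabiliser. -/
lemma card_fiber_le {G : Type*} [Group G] [Finite G] (H : Subgroup G) (c d : G ⧸ H) :
    Nat.card {g : G // (g : G ⧸ H) = c ∧ ((g⁻¹ : G) : G ⧸ H) = d} ≤ Nat.card (stabilizer H d) := by
  by_cases hne : Nonempty {g : G // (g : G ⧸ H) = c ∧ ((g⁻¹ : G) : G ⧸ H) = d}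
  · obtain ⟨g₀, hc, hd⟩ := hne
    subst hc hd
    have key : ∀ g : {g : G // (g : G ⧸ H) = g₀ ∧ ((g⁻¹ : G) : G ⧸ H) = (g₀⁻¹ : G)},
        g.1⁻¹ * g₀ ∈ H := fun g => QuotientGroup.eq.mp g.2.1
    refine Nat.card_le_card_of_injective
      (fun g => (⟨⟨g.1⁻¹ * g₀, key g⟩, ?_⟩ : stabilizer H ((g₀⁻¹ : G) : G ⧸ H))) ?_
    · rw [mem_stabilizer_iff]
      change (((g.1⁻¹ * g₀) * g₀⁻¹ : G) : G ⧸ H) = _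
      simpa using g.2.2
    · intro g g' h
      have : g.1⁻¹ * g₀ = g'.1⁻¹ * g₀ := congrArg (fun z => ((z.1 : H) : G)) h
      exact Subtype.ext (by simpa using this)
  · rw [not_nonempty_iff] at hne
    simp

/-- The permutations of `G ⧸ H` of the form `gH ↦ g⁻¹H`, for some choice of coset representatives,
differ from one another by permutations preserving every `H`-orbit. -/
lemma card_perm_le {G : Type*} [Group G] [Finite G] (H : Subgroup G) :
    Nat.card {σ : Equiv.Perm (G ⧸ H) // ∀ c, ∃ g : G, (g : G ⧸ H) = c ∧ ((g⁻¹ : G) : G ⧸ H) = σ c} ≤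
      ∏ᶠ ω : orbitRel.Quotient H (G ⧸ H), (Nat.card ω.orbit).factorial := by
  have := Fintype.ofFinite (G ⧸ H)
  have := Fintype.ofFinite (orbitRel.Quotient H (G ⧸ H))
  classical
  set o : G ⧸ H → orbitRel.Quotient H (G ⧸ H) := fun c => Quotient.mk'' c with ho
  have hcard : Nat.card {τ : Equiv.Perm (G ⧸ H) // o ∘ τ = o} =
      ∏ᶠ ω : orbitRel.Quotient H (G ⧸ H), (Nat.card ω.orbit).factorial := by
    rw [Nat.card_eq_fintype_card, DomMulAct.stabilizer_card, finprod_eq_prod_of_fintype]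
    refine Finset.prod_congr rfl fun ω _ => ?_
    rw [← Nat.card_eq_fintype_card]
    congr 1
    refine Nat.card_congr (Equiv.subtypeEquivRight fun c => ?_)
    rw [orbitRel.Quotient.mem_orbit]
  rw [← hcard]
  by_cases hne : Nonempty {σ : Equiv.Perm (G ⧸ H) //
      ∀ c, ∃ g : G, (g : G ⧸ H) = c ∧ ((g⁻¹ : G) : G ⧸ H) = σ c}
  · obtain ⟨σ₀, h₀⟩ := hne
    refine Nat.card_le_card_of_injective (fun σ => ⟨σ₀⁻¹ * σ.1, ?_⟩) ?_
    · funext c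
      obtain ⟨g, hg, hg'⟩ := σ.2 c
      obtain ⟨k, hk, hk'⟩ := h₀ ((σ₀⁻¹ * σ.1) c)
      rw [Equiv.Perm.mul_apply, ← Equiv.Perm.mul_apply, mul_inv_cancel, Equiv.Perm.one_apply,
        ← hg'] at hk'
      have hm := QuotientGroup.eq.mp hk'
      rw [inv_inv] at hm
      simp only [ho, Function.comp_apply]
      rw [Quotient.eq'', orbitRel_apply]
      refine ⟨⟨k * g⁻¹, hm⟩, ?_⟩
      rw [← hk, ← hg]
      change (((k * g⁻¹) * g : G) : G ⧸ H) = _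
      simp
    · intro σ σ' h
      have := congrArg Subtype.val h
      exact Subtype.ext (mul_left_cancel this)
  · rw [not_nonempty_iff] at hne
    simp

/-- A common transversal `T` induces the permutation `tH ↦ t⁻¹H` of `G ⧸ H`, and is determined by
this permutation together with the representative it picks in each left coset. -/
lemma numDT_le {G : Type*} [Group G] [Finite G] (H : Subgroup G) :
    numDT H H ≤ (∏ᶠ ω : orbitRel.Quotient H (G ⧸ H), (Nat.card ω.orbit).factorial) *
      ∏ᶠ c : G ⧸ H, Nat.card (stabilizer H c) := by
  have := Fintype.ofFinite (G ⧸ H)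
  let S := {σ : Equiv.Perm (G ⧸ H) //
      ∀ c, ∃ g : G, (g : G ⧸ H) = c ∧ ((g⁻¹ : G) : G ⧸ H) = σ c}
  have := Fintype.ofFinite S
  let F : S → Type _ := fun σ => ∀ c : G ⧸ H,
    {g : G // (g : G ⧸ H) = c ∧ ((g⁻¹ : G) : G ⧸ H) = σ.1 c}
  have h1 : Nat.card (Σ σ : S, F σ) ≤ (∏ᶠ ω : orbitRel.Quotient H (G ⧸ H),
      (Nat.card ω.orbit).factorial) * ∏ᶠ c : G ⧸ H, Nat.card (stabilizer H c) := by
    rw [Nat.card_sigma]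
    calc _ ≤ ∑ σ : S, ∏ᶠ c : G ⧸ H, Nat.card (stabilizer H c) := by
          refine Finset.sum_le_sum fun σ _ => ?_
          rw [Nat.card_pi, finprod_eq_prod_of_fintype,
            ← Equiv.prod_comp σ.1 (fun c => Nat.card (stabilizer H c))]
          exact Finset.prod_le_prod' fun c _ => card_fiber_le H c _
      _ ≤ _ := by
          rw [Finset.sum_const, Finset.card_univ, ← Nat.card_eq_fintype_card, smul_eq_mul]
          exact Nat.mul_le_mul_right _ (card_perm_le H)
  refine le_trans ?_ h1
  -- the section of `G → G ⧸ H` picked out by `T`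
  have hs : ∀ T : {T : Set G // IsDoubleTransversal H H T}, ∀ c : G ⧸ H,
      ∃ t, t ∈ T.1 ∧ (t : G ⧸ H) = c := by
    intro T c
    obtain ⟨t, ⟨ht, ht'⟩, -⟩ := T.2.1 c.out
    refine ⟨t, ht, ?_⟩
    rw [← QuotientGroup.eq.mpr ht', QuotientGroup.out_eq']
  choose s hsT hsc using hs
  have huniq : ∀ T : {T : Set G // IsDoubleTransversal H H T}, ∀ t ∈ T.1, s T (t : G ⧸ H) = t := by
    intro T t ht
    refine (T.2.1 t).unique ⟨hsT _ _, ?_⟩ ⟨ht, by simp⟩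
    exact QuotientGroup.eq.mp (hsc _ _).symm
  have hinj : ∀ T, Function.Injective fun c : G ⧸ H => (((s T c)⁻¹ : G) : G ⧸ H) := by
    intro T c d h
    have h' := QuotientGroup.eq.mp h
    rw [inv_inv] at h'
    have := (T.2.2 (s T d)).unique ⟨hsT T c, h'⟩ ⟨hsT T d, by simp⟩
    rw [← hsc T c, this, hsc]
  let σ : {T : Set G // IsDoubleTransversal H H T} → S := fun T =>
    ⟨Equiv.ofBijective _ (Finite.injective_iff_bijective.mp (hinj T)),
      fun c => ⟨s T c, hsc T c, rfl⟩⟩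
  refine Nat.card_le_card_of_injective
    (fun T => (⟨σ T, fun c => ⟨s T c, hsc T c, rfl⟩⟩ : Σ σ : S, F σ)) ?_
  intro T T' h
  have h2 : ∀ c, s T c = s T' c := by
    intro c
    have := congrArg (fun z : (Σ σ : S, F σ) => ((z.2 c).1 : G)) h
    exact this
  apply Subtype.ext
  ext t
  constructor
  · intro ht
    rw [← huniq T t ht, h2]; exact hsT _ _
  · intro ht
    rw [← huniq T' t ht, ← h2]; exact hsT _ _

lemma transProb_le {G : Type*} [Group G] [Finite G] (H : Subgroup G) :
    transProb H H ≤ orbitProd H (G ⧸ H) := by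
  have := Fintype.ofFinite (G ⧸ H)
  have := Fintype.ofFinite (orbitRel.Quotient H (G ⧸ H))
  have hH : (0 : ℚ) < Nat.card H := by exact_mod_cast Nat.card_pos
  have hle : (numDT H H : ℚ) ≤ _ := Nat.cast_le.mpr (numDT_le H)
  rw [finprod_eq_prod_of_fintype, finprod_eq_prod_of_fintype] at hle
  push_cast at hle
  have hst : ∀ c : G ⧸ H, (Nat.card (stabilizer H c) : ℚ) =
      Nat.card H / Nat.card (orbit H c) := by
    intro c
    have h := Nat.card_congr (orbitProdStabilizerEquivGroup H c)
    rw [Nat.card_prod] at h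
    have h0 : (Nat.card (orbit H c) : ℚ) ≠ 0 := by
      have : Nonempty (orbit H c) := ⟨⟨c, mem_orbit_self c⟩⟩
      exact_mod_cast Nat.card_pos.ne'
    rw [← h]
    push_cast
    field_simp
  have hprod : ∏ c : G ⧸ H, (Nat.card (stabilizer H c) : ℚ) =
      (Nat.card H : ℚ) ^ H.index / ∏ ω : orbitRel.Quotient H (G ⧸ H),
        (Nat.card ω.orbit : ℚ) ^ Nat.card ω.orbit := by
    simp_rw [hst]
    rw [Finset.prod_div_distrib, Finset.prod_const, Finset.card_univ, ← Nat.card_eq_fintype_card,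
      ← Subgroup.index]
    congr 1
    rw [← Finset.prod_fiberwise Finset.univ
      (fun c : G ⧸ H => (Quotient.mk'' c : orbitRel.Quotient H (G ⧸ H)))]
    refine Finset.prod_congr rfl fun ω _ => ?_
    have : ∀ c ∈ Finset.univ.filter
        (fun c : G ⧸ H => (Quotient.mk'' c : orbitRel.Quotient H (G ⧸ H)) = ω),
        (Nat.card (orbit H c) : ℚ) = Nat.card (orbitRel.Quotient.orbit (G := H) ω) := by
      intro c hc
      rw [← (Finset.mem_filter.mp hc).2, orbitRel.Quotient.orbit_mk]
    rw [Finset.prod_congr rfl this, Finset.prod_const]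
    congr 1
    rw [← Set.ncard_coe_finset, Nat.card_coe_set_eq]
    congr 1
    ext c
    simp [orbitRel.Quotient.mem_orbit]
  rw [hprod] at hle
  unfold transProb orbitProd
  rw [finprod_eq_prod_of_fintype, Finset.prod_div_distrib, div_le_iff₀ (by positivity)]
  refine hle.trans (le_of_eq ?_)
  ring

/-! ### Inheritance, and the bound for subgroups of prime order -/

lemma orbitFactor_nonneg (m : ℕ) : (0 : ℚ) ≤ (m.factorial : ℚ) / (m : ℚ) ^ m := by positivity

lemma orbitFactor_le_one (m : ℕ) : (m.factorial : ℚ) / (m : ℚ) ^ m ≤ 1 := by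
  apply div_le_one_of_le₀ _ (by positivity)
  exact_mod_cast Nat.factorial_le_pow m

/-- The inductive step is Bernoulli: `(1 + 1 / (n + 1)) ^ (n + 1) ≥ 2`. -/
lemma two_pow_mul_factorial_le (n : ℕ) : 2 ^ n * (n + 1).factorial ≤ (n + 1) ^ (n + 1) := by
  induction n with
  | zero => simp
  | succ n ih =>
    have hb : 2 * (n + 1) ^ (n + 1) ≤ (n + 2) ^ (n + 1) := by
      have h := one_add_mul_le_pow (a := (1 / (n + 1) : ℚ))
        ((by norm_num : (-2 : ℚ) ≤ 0).trans (by positivity)) (n + 1)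
      have h0 : (0 : ℚ) < (n + 1) ^ (n + 1) := by positivity
      have h1 : (1 : ℚ) + ((n + 1 : ℕ) : ℚ) * (1 / (n + 1)) = 2 := by
        push_cast; field_simp; norm_num
      have h2 : (1 + 1 / (n + 1) : ℚ) = (n + 2) / (n + 1) := by field_simp; ring
      rw [h1, h2, div_pow, le_div_iff₀ h0] at h
      exact_mod_cast h
    calc 2 ^ (n + 1) * (n + 1 + 1).factorial
        = 2 * (n + 2) * (2 ^ n * (n + 1).factorial) := by
          rw [Nat.factorial_succ (n + 1)]; ring
      _ ≤ 2 * (n + 2) * (n + 1) ^ (n + 1) := Nat.mul_le_mul_left _ ih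
      _ = (n + 2) * (2 * (n + 1) ^ (n + 1)) := by ring
      _ ≤ (n + 2) * (n + 2) ^ (n + 1) := Nat.mul_le_mul_left _ hb
      _ = (n + 1 + 1) ^ (n + 1 + 1) := by ring

lemma orbitFactor_le {m : ℕ} (hm : 1 ≤ m) :
    (m.factorial : ℚ) / (m : ℚ) ^ m ≤ (1 / 2) ^ (m - 1) := by
  obtain ⟨n, rfl⟩ : ∃ n, m = n + 1 := ⟨m - 1, by omega⟩
  have h : (2 : ℚ) ^ n * (n + 1).factorial ≤ ((n + 1 : ℕ) : ℚ) ^ (n + 1) := by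
    exact_mod_cast two_pow_mul_factorial_le n
  rw [div_le_iff₀ (by positivity), Nat.add_sub_cancel, one_div, inv_pow, inv_mul_eq_div,
    le_div_iff₀ (by positivity)]
  linarith

/-- If an `A'`-set embeds in an `A`-set as a union of orbits, with the same orbits, then it has
the larger orbit product, since every factor is at most `1`. -/
lemma orbitProd_mono {A X A' X' : Type*} [Group A] [MulAction A X] [Group A'] [MulAction A' X']
    [Finite X] (i : X' → X) (hi : Function.Injective i)
    (h : ∀ x, i '' orbit A' x = orbit A (i x)) : orbitProd A X ≤ orbitProd A' X' := by
  classical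
  have : Finite X' := Finite.of_injective i hi
  have := Fintype.ofFinite (orbitRel.Quotient A X)
  have := Fintype.ofFinite (orbitRel.Quotient A' X')
  let j : orbitRel.Quotient A' X' → orbitRel.Quotient A X :=
    Quotient.map' i (by
      intro x y hxy
      change i x ∈ orbit A (i y)
      rw [← h]
      exact ⟨x, hxy, rfl⟩)
  have hj : Function.Injective j := by
    intro a b
    refine Quotient.inductionOn₂' a b fun x y hxy => ?_
    have h1 : i x ∈ orbit A (i y) := Quotient.exact' hxy
    rw [← h] at h1
    obtain ⟨z, hz, hz'⟩ := h1
    rw [hi hz'] at hz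
    exact Quotient.sound' hz
  have hcard : ∀ a, Nat.card (orbitRel.Quotient.orbit (j a)) = Nat.card a.orbit := by
    intro a
    refine Quotient.inductionOn' a fun x => ?_
    change Nat.card (orbit A (i x)) = Nat.card (orbit A' x)
    rw [← h]
    exact Nat.card_image_of_injective hi _
  unfold orbitProd
  rw [finprod_eq_prod_of_fintype, finprod_eq_prod_of_fintype]
  rw [← Finset.prod_mul_prod_compl (Finset.univ.image j), Finset.prod_image (by
    intro a _ b _ hab; exact hj hab)]
  simp_rw [hcard]
  refine mul_le_of_le_one_right (Finset.prod_nonneg fun _ _ => orbitFactor_nonneg _) ?_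
  exact Finset.prod_le_one (fun _ _ => orbitFactor_nonneg _) (fun _ _ => orbitFactor_le_one _)

/-- Every orbit product `orbitProd H (G ⧸ H)` exceeds `2⁻⁴⁰`. This follows from `tp G > 2⁻⁴⁰` and,
unlike a bound on `tp`, visibly passes to subgroups and quotients. -/
def TransversalRich (G : Type*) [Group G] : Prop :=
  ∀ H : Subgroup G, (1 / 2 : ℚ) ^ 40 < orbitProd H (G ⧸ H)

/-- For `H ≤ K ≤ G`, the `H`-set `K ⧸ H` is a union of `H`-orbits of `G ⧸ H`. -/
lemma TransversalRich.subgroup {G : Type*} [Group G] [Finite G] (hG : TransversalRich G)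
    (K : Subgroup G) : TransversalRich K := by
  intro H'
  refine (hG (H'.map K.subtype)).trans_le ?_
  let i : K ⧸ H' → G ⧸ H'.map K.subtype :=
    Quotient.map' (fun k : K => (k : G)) (by
      intro a b hab
      rw [QuotientGroup.leftRel_apply] at hab ⊢
      exact ⟨a⁻¹ * b, hab, by simp⟩)
  refine orbitProd_mono i ?_ ?_
  · intro a b
    refine Quotient.inductionOn₂' a b fun x y hxy => ?_
    have h1 := QuotientGroup.eq.mp hxy
    obtain ⟨z, hz, hz'⟩ := h1
    apply QuotientGroup.eq.mpr
    have : z = x⁻¹ * y := Subtype.ext (by simpa using hz')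
    rwa [← this]
  · intro a
    refine Quotient.inductionOn' a fun x => ?_
    ext y
    constructor
    · rintro ⟨_, ⟨h, rfl⟩, rfl⟩
      exact ⟨⟨(h : K), ⟨h, h.2, rfl⟩⟩, rfl⟩
    · rintro ⟨⟨_, ⟨h, hh, rfl⟩⟩, rfl⟩
      exact ⟨_, ⟨⟨h, hh⟩, rfl⟩, rfl⟩

lemma TransversalRich.quotient {G : Type*} [Group G] [Finite G] (hG : TransversalRich G)
    (N : Subgroup G) [N.Normal] : TransversalRich (G ⧸ N) := by
  intro H'
  refine (hG (H'.comap (QuotientGroup.mk' N))).trans_le ?_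
  let j : G ⧸ H'.comap (QuotientGroup.mk' N) → (G ⧸ N) ⧸ H' :=
    Quotient.map' (fun g : G => (g : G ⧸ N)) (by
      intro a b hab
      rw [QuotientGroup.leftRel_apply] at hab ⊢
      exact hab)
  have hj : Function.Bijective j := by
    constructor
    · intro a b
      refine Quotient.inductionOn₂' a b fun x y hxy => ?_
      have h1 := QuotientGroup.eq.mp hxy
      apply QuotientGroup.eq.mpr
      exact h1
    · intro b
      refine Quotient.inductionOn' b fun x => ?_
      refine Quotient.inductionOn' x fun g => ?_
      exact ⟨(g : G ⧸ _), rfl⟩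
  have himg : ∀ y, j '' orbit (H'.comap (QuotientGroup.mk' N)) y = orbit H' (j y) := by
    intro y
    refine Quotient.inductionOn' y fun x => ?_
    ext z
    constructor
    · rintro ⟨_, ⟨h, rfl⟩, rfl⟩
      exact ⟨⟨((h : G) : G ⧸ N), h.2⟩, rfl⟩
    · rintro ⟨⟨k, hk⟩, rfl⟩
      obtain ⟨g, rfl⟩ := QuotientGroup.mk'_surjective N k
      exact ⟨_, ⟨⟨g, hk⟩, rfl⟩, rfl⟩
  let e := Equiv.ofBijective j hj
  refine orbitProd_mono e.symm e.symm.injective ?_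
  intro x
  obtain ⟨y, rfl⟩ := e.surjective x
  rw [e.symm_apply_apply]
  change e.symm '' orbit H' (j y) = _
  rw [← himg]
  change e.symm '' (e '' _) = _
  rw [e.symm_image_image]

/-- A subgroup `H` of order `p` has orbits of size `1` and `p` on `G ⧸ H`. The fixed points
account for the normaliser, and each of the `k` orbits of size `p` contributes a factor
`p! / p ^ p ≤ 2 ^ (1 - p)` to the orbit product. -/
lemma TransversalRich.prime_bound {G : Type*} [Group G] [Finite G] (hG : TransversalRich G)
    (H : Subgroup G) {p : ℕ} (hp : p.Prime) (hH : Nat.card H = p) :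
    ∃ k : ℕ, Nat.card G = Nat.card (Subgroup.normalizer (H : Set G)) + k * p ^ 2 ∧
      k * (p - 1) < 40 := by
  classical
  have := Fintype.ofFinite (G ⧸ H)
  have := Fintype.ofFinite (orbitRel.Quotient H (G ⧸ H))
  let Ω := orbitRel.Quotient H (G ⧸ H)
  let o : G ⧸ H → Ω := fun c => Quotient.mk'' c
  let B : Finset Ω := Finset.univ.filter fun ω => Nat.card (orbitRel.Quotient.orbit (G := H) ω) ≠ 1
  have hB : ∀ ω ∈ B, Nat.card (orbitRel.Quotient.orbit (G := H) ω) = p := by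
    intro ω hω
    refine ((Nat.dvd_prime hp).mp ?_).resolve_left (Finset.mem_filter.mp hω).2
    refine Quotient.inductionOn' ω fun c => ?_
    change Nat.card (orbit H c) ∣ p
    rw [← hH, ← Nat.card_congr (orbitProdStabilizerEquivGroup H c), Nat.card_prod]
    exact dvd_mul_right _ _
  have hfix : ∀ c : G ⧸ H, c ∈ fixedPoints H (G ⧸ H) ↔ Nat.card (orbit H c) = 1 := by
    intro c
    have := Fintype.ofFinite (orbit H c)
    rw [mem_fixedPoints_iff_card_orbit_eq_one, Nat.card_eq_fintype_card]
  refine ⟨B.card, ?_, ?_⟩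
  · -- count the points of `G ⧸ H` that are not fixed by `H`, orbit by orbit
    have h1 : (Finset.univ.filter fun c : G ⧸ H => c ∉ fixedPoints H (G ⧸ H)).card =
        B.card * p := by
      rw [Finset.card_eq_sum_card_fiberwise (f := o) (t := B)]
      · rw [Finset.sum_congr rfl (g := fun _ => p), Finset.sum_const, smul_eq_mul]
        intro ω hω
        rw [← hB ω hω, ← Set.ncard_coe_finset, Nat.card_coe_set_eq]
        congr 1
        ext c
        simp only [Finset.coe_filter, Finset.mem_filter, Finset.mem_univ, true_and,
          Set.mem_ofPred_eq, hfix]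
        rw [orbitRel.Quotient.mem_orbit]
        constructor
        · exact fun h => h.2
        · intro h
          refine ⟨?_, h⟩
          have h2 := (Finset.mem_filter.mp hω).2
          rw [← h] at h2
          exact h2
      · intro c hc
        have hc := (Finset.mem_filter.mp hc).2
        rw [hfix] at hc
        exact Finset.mem_filter.mpr ⟨Finset.mem_univ _, hc⟩
    have h2 : (Finset.univ.filter fun c : G ⧸ H => c ∈ fixedPoints H (G ⧸ H)).card * p =
        Nat.card (Subgroup.normalizer (H : Set G)) := by
      have h3 := Nat.card_congr (Sylow.fixedPointsMulLeftCosetsEquivQuotient H)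
      rw [Subgroup.card_eq_card_quotient_mul_card_subgroup
        (H.comap (Subgroup.normalizer (H : Set G)).subtype), ← h3]
      congr 1
      · rw [← Set.ncard_coe_finset, Nat.card_coe_set_eq]
        congr 1
        ext c
        rw [Finset.mem_coe, Finset.mem_filter]
        simp only [Finset.mem_univ, true_and]
      · rw [← hH]
        exact (Nat.card_congr (Subgroup.subgroupOfEquivOfLe Subgroup.le_normalizer).toEquiv).symm
    have h4 := Finset.card_filter_add_card_filter_not (s := (Finset.univ : Finset (G ⧸ H)))
      (fun c : G ⧸ H => c ∈ fixedPoints H (G ⧸ H))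
    rw [h1, Finset.card_univ, ← Nat.card_eq_fintype_card] at h4
    rw [Subgroup.card_eq_card_quotient_mul_card_subgroup H, ← h4, hH, ← h2]
    ring
  · have h1 := hG H
    have h2 : orbitProd H (G ⧸ H) ≤ (1 / 2 : ℚ) ^ (B.card * (p - 1)) := by
      unfold orbitProd
      rw [finprod_eq_prod_of_fintype, ← Finset.prod_mul_prod_compl B]
      calc _ ≤ _ := mul_le_of_le_one_right (Finset.prod_nonneg fun _ _ => orbitFactor_nonneg _)
            (Finset.prod_le_one (fun _ _ => orbitFactor_nonneg _) (fun _ _ => orbitFactor_le_one _))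
        _ ≤ ∏ ω ∈ B, (1 / 2 : ℚ) ^ (p - 1) := by
            refine Finset.prod_le_prod (fun _ _ => orbitFactor_nonneg _) fun ω hω => ?_
            rw [hB ω hω]
            exact orbitFactor_le hp.one_lt.le
        _ = _ := by rw [Finset.prod_const, ← pow_mul, mul_comm]
    exact (pow_lt_pow_iff_right_of_lt_one₀ (by norm_num) (by norm_num)).mp (h1.trans_le h2)

/-! ### Numerical restrictions on nonsolvable simple groups -/

section Simple

variable {G : Type*} [Group G]

lemma toPermHom_mem_alternating [IsSimpleGroup G] (hns : ¬ Group.IsSolvable G)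
    {X : Type*} [Fintype X] [DecidableEq X] [MulAction G X] (g : G) : MulAction.toPermHom G X g ∈ alternatingGroup X := by
  let s : G →* ℤˣ := Equiv.Perm.sign.comp (MulAction.toPermHom G X)
  rcases s.normal_ker.eq_bot_or_eq_top with h | h
  · exact absurd (Group.isSolvable_of_isSolvable_injective ((MonoidHom.ker_eq_bot_iff s).mp h)) hns
  · rw [Equiv.Perm.mem_alternatingGroup]
    have : g ∈ s.ker := h ▸ Subgroup.mem_top g
    exact this

lemma toPermHom_injective [IsSimpleGroup G] {X : Type*} [MulAction G X] {g : G} {x : X}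
    (hgx : g • x ≠ x) :
    Function.Injective (MulAction.toPermHom G X) := by
  rw [← MonoidHom.ker_eq_bot_iff]
  refine ((MulAction.toPermHom G X).normal_ker.eq_bot_or_eq_top).resolve_right fun h => hgx ?_
  have hg : g ∈ (MulAction.toPermHom G X).ker := h ▸ Subgroup.mem_top g
  have := congrArg (fun σ : Equiv.Perm X => σ x) ((MonoidHom.mem_ker).mp hg)
  exact this

lemma exists_smul_ne {H : Subgroup G} (hH : H ≠ ⊤) :
    ∃ g : G, g • ((1 : G) : G ⧸ H) ≠ ((1 : G) : G ⧸ H) := by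
  by_contra! h
  refine hH (Subgroup.eq_top_iff' H |>.mpr fun g => ?_)
  have h1 := h g
  have h2 : (((g * 1 : G)) : G ⧸ H) = ((1 : G) : G ⧸ H) := h1
  have h3 := QuotientGroup.eq.mp h2.symm
  simpa using h3

lemma exists_embedding [IsSimpleGroup G] (hns : ¬ Group.IsSolvable G) {H : Subgroup G}
    (hH : H ≠ ⊤) [Fintype (G ⧸ H)] [DecidableEq (G ⧸ H)] :
    ∃ f : G →* alternatingGroup (G ⧸ H), Function.Injective f := by
  obtain ⟨g, hg⟩ := exists_smul_ne hH
  refine ⟨(MulAction.toPermHom G (G ⧸ H)).codRestrict _ (toPermHom_mem_alternating hns), ?_⟩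
  intro a b hab
  exact toPermHom_injective hg (congrArg Subtype.val hab)

/-- A nonsolvable simple group acts faithfully on `G ⧸ H` by even permutations. -/
lemma two_mul_card_dvd [Finite G] [IsSimpleGroup G] (hns : ¬ Group.IsSolvable G) {H : Subgroup G}
    (hH : H ≠ ⊤) : 2 * Nat.card G ∣ H.index.factorial := by
  classical
  have := Fintype.ofFinite (G ⧸ H)
  obtain ⟨f, hf⟩ := exists_embedding hns hH
  have hn : Nontrivial (G ⧸ H) := by
    obtain ⟨g, hg⟩ := exists_smul_ne hH
    exact ⟨_, _, hg⟩
  have h1 : 2 * Nat.card (alternatingGroup (G ⧸ H)) = H.index.factorial := by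
    rw [Nat.card_eq_fintype_card, two_mul_card_alternatingGroup, Fintype.card_perm,
      ← Nat.card_eq_fintype_card, Subgroup.index]
  rw [← h1]
  exact Nat.mul_dvd_mul_left 2 (Subgroup.card_dvd_of_injective f hf)

lemma not_isPGroup [Finite G] (hns : ¬ Group.IsSolvable G) {p : ℕ} [Fact p.Prime] :
    ¬ IsPGroup p G := by
  intro h
  have := h.isNilpotent
  exact hns IsNilpotent.to_isSolvable

lemma sylow_ne_bot [Finite G] {p : ℕ} [Fact p.Prime] (P : Sylow p G) (hp : p ∣ Nat.card G) :
    (P : Subgroup G) ≠ ⊥ := by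
  intro h
  have h1 := P.dvd_card_of_dvd_card hp
  rw [h, Subgroup.card_bot] at h1
  exact (Fact.out : p.Prime).one_lt.ne' (Nat.dvd_one.mp h1)

lemma sylow_ne_top [Finite G] (hns : ¬ Group.IsSolvable G) {p : ℕ} [Fact p.Prime] (P : Sylow p G) :
    (P : Subgroup G) ≠ ⊤ := by
  intro h
  have h1 := P.isPGroup'
  rw [h] at h1
  exact not_isPGroup hns (h1.of_equiv Subgroup.topEquiv)

/-- Burnside's transfer theorem for a nonsolvable simple group. -/
lemma sylow_burnside [Finite G] [IsSimpleGroup G] (hns : ¬ Group.IsSolvable G) {p : ℕ}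
    [Fact p.Prime] (P : Sylow p G) (hp : p ∣ Nat.card G) :
    ¬ Subgroup.normalizer ((P : Subgroup G) : Set G) ≤
      Subgroup.centralizer ((P : Subgroup G) : Set G) := by
  intro h
  have hc := MonoidHom.ker_transferSylow_isComplement' P h
  rcases (MonoidHom.transferSylow P h).normal_ker.eq_bot_or_eq_top with h1 | h1
  · rw [h1] at hc
    exact sylow_ne_top hns P (Subgroup.isComplement'_bot_left.mp hc)
  · rw [h1] at hc
    exact sylow_ne_bot P hp (Subgroup.isComplement'_top_left.mp hc)

/-- The conditions on the number `d` of Sylow `p`-subgroups used below. The last one holds because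
`d = m` means that a Sylow subgroup is its own normaliser, while `a ≤ 2` makes it abelian,
against Burnside's transfer theorem. -/
lemma sylow_constraint [Finite G] [IsSimpleGroup G] (hns : ¬ Group.IsSolvable G) {p a m : ℕ}
    (hp : p.Prime) (ha : a ≠ 0)
    (hcard : Nat.card G = p ^ a * m) (hm : ¬ p ∣ m) :
    ∃ (P : Sylow p G) (d : ℕ), Nat.card P = p ^ a ∧
      (Subgroup.normalizer ((P : Subgroup G) : Set G)).index = d ∧
      Subgroup.normalizer ((P : Subgroup G) : Set G) ≠ ⊤ ∧ d ∣ m ∧ d % p = 1 ∧ d ≠ 1 ∧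
      2 * Nat.card G ∣ d.factorial ∧ ¬ (d = m ∧ a ≤ 2) := by
  have : Fact p.Prime := ⟨hp⟩
  have hpG : p ∣ Nat.card G := hcard ▸ (dvd_pow_self p ha).mul_right m
  obtain ⟨P⟩ : Nonempty (Sylow p G) := inferInstance
  have hPc : Nat.card P = p ^ a := by
    rw [P.card_eq_multiplicity, hcard, Nat.factorization_mul (pow_ne_zero _ hp.ne_zero)
      (by rintro rfl; simp at hm), Nat.Prime.factorization_pow hp]
    simp [Nat.factorization_eq_zero_of_not_dvd hm]
  have hPi : (P : Subgroup G).index = m := by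
    have := (P : Subgroup G).card_mul_index
    rw [hcard, show Nat.card (P : Subgroup G) = p ^ a from hPc] at this
    exact Nat.eq_of_mul_eq_mul_left (pow_pos hp.pos _) this
  have hN : Subgroup.normalizer ((P : Subgroup G) : Set G) ≠ ⊤ := by
    intro h
    have hn : (P : Subgroup G).Normal := Subgroup.normalizer_eq_top_iff.mp h
    exact hn.eq_bot_or_eq_top.elim (sylow_ne_bot P hpG) (sylow_ne_top hns P)
  have hd : Nat.card (Sylow p G) = (Subgroup.normalizer ((P : Subgroup G) : Set G)).index :=
    P.card_eq_index_normalizer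
  refine ⟨P, _, hPc, rfl, hN, ?_, ?_, ?_, two_mul_card_dvd hns hN, ?_⟩
  · rw [← hPi]; exact Subgroup.index_dvd_of_le Subgroup.le_normalizer
  · rw [← hd, card_sylow_modEq_one p G, Nat.mod_eq_of_lt hp.one_lt]
  · rwa [Ne, Subgroup.index_eq_one]
  · rintro ⟨h1, h2⟩
    refine sylow_burnside hns P hpG ?_
    have h3 : (P : Subgroup G) = Subgroup.normalizer ((P : Subgroup G) : Set G) := by
      refine Subgroup.eq_of_le_of_card_ge Subgroup.le_normalizer (le_of_eq ?_)
      have h4 := (P : Subgroup G).card_mul_index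
      have h5 := (Subgroup.normalizer ((P : Subgroup G) : Set G)).card_mul_index
      rw [h1, ← hPi, ← h4] at h5
      exact Nat.eq_of_mul_eq_mul_right (Nat.pos_of_ne_zero Subgroup.index_ne_zero_of_finite) h5
    rw [← h3]
    have hcomm : ∀ x y : P, x * y = y * x := by
      interval_cases a
      · exact absurd rfl ha
      · have := isCyclic_of_prime_card (hPc.trans (pow_one p))
        exact isMulCommutative_iff.mp IsCyclic.isMulCommutative
      · exact isMulCommutative_iff.mp (IsPGroup.isMulCommutative_of_card_eq_prime_sq hPc)
    intro x hx y hy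
    exact congrArg Subtype.val (hcomm ⟨y, hy⟩ ⟨x, hx⟩)

end Simple

/-- For some prime `p ≤ 31`, with `p ^ a` the exact power dividing `n` and `1 ≤ a ≤ 8`, no `d` meets
the numerical conditions of `sylow_constraint`, so `n` is not the order of a nonsolvable simple
group. -/
def sylowExcluded (n : ℕ) : Bool :=
  [2, 3, 5, 7, 11, 13, 17, 19, 23, 29, 31].any fun p => [1, 2, 3, 4, 5, 6, 7, 8].any fun a =>
    n % p ^ a == 0 && n % p ^ (a + 1) != 0 &&
      (List.range (n / p ^ a + 1)).all fun d =>
        (n / p ^ a) % d != 0 || d % p != 1 || d == 1 || d.factorial % (2 * n) != 0 ||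
          (d == n / p ^ a && decide (a ≤ 2))

theorem even_orders : ∀ n < 200, n % 2 = 0 → 0 < n →
    sylowExcluded n = true ∨ n = 60 ∨ n = 120 ∨ n = 168 ∨ n = 180 := by
  decide +kernel

theorem odd_orders : ∀ n < 300, n % 2 = 1 → n % 3 = 0 ∨ n % 5 = 0 → sylowExcluded n = true := by
  decide +kernel

/-! ### The surviving orders -/

section Orders

variable {G : Type*} [Group G]

lemma not_sylowExcluded [Finite G] [IsSimpleGroup G] (hns : ¬ Group.IsSolvable G) :
    sylowExcluded (Nat.card G) ≠ true := by
  intro h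
  simp only [sylowExcluded, List.any_eq_true, Bool.and_eq_true, beq_iff_eq, bne_iff_ne] at h
  obtain ⟨p, hp, a, ha, ⟨h1, h2⟩, h3⟩ := h
  have hpp : p.Prime := by
    simp only [List.mem_cons, List.not_mem_nil, or_false] at hp
    rcases hp with rfl | rfl | rfl | rfl | rfl | rfl | rfl | rfl | rfl | rfl | rfl <;> norm_num
  have ha0 : a ≠ 0 := by
    rintro rfl
    simp at ha
  have hdvd : p ^ a ∣ Nat.card G := Nat.dvd_of_mod_eq_zero h1
  obtain ⟨m, hm⟩ := hdvd
  have hmdiv : Nat.card G / p ^ a = m := by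
    rw [hm, Nat.mul_div_cancel_left _ (pow_pos hpp.pos _)]
  have hpm : ¬ p ∣ m := by
    rintro ⟨r, rfl⟩
    exact h2 (Nat.mod_eq_zero_of_dvd ⟨r, by rw [hm]; ring⟩)
  obtain ⟨P, d, -, -, -, hdm, hd1, hd2, hd3, hd4⟩ := sylow_constraint hns hpp ha0 hm hpm
  have hm0 : 0 < m := Nat.pos_of_ne_zero (by rintro rfl; simp at hpm)
  rw [hmdiv] at h3
  have h5 := List.all_eq_true.mp h3 d (List.mem_range.mpr (by
    have := Nat.le_of_dvd hm0 hdm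
    omega))
  simp only [Bool.or_eq_true, bne_iff_ne, beq_iff_eq, Bool.and_eq_true, decide_eq_true_eq] at h5
  rcases h5 with (((h5 | h5) | h5) | h5) | h5
  · exact h5 (Nat.mod_eq_zero_of_dvd hdm)
  · exact h5 hd1
  · exact hd2 h5
  · exact h5 (Nat.mod_eq_zero_of_dvd hd3)
  · exact hd4 h5

lemma exists_surjective_of_card_eq_sixty [Finite G] [IsSimpleGroup G] (hns : ¬ Group.IsSolvable G)
    (hc : Nat.card G = 60) :
    ∃ φ : G →* alternatingGroup (Fin 5), Function.Surjective φ := by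
  classical
  obtain ⟨P, d, -, hN, hNt, hdm, -, hd2, hd3, hd4⟩ :=
    sylow_constraint hns Nat.prime_two (a := 2) (m := 15) (by norm_num) (by rw [hc]; norm_num)
      (by norm_num)
  have hd : d = 5 := by
    have h1 : d ≤ 15 := Nat.le_of_dvd (by norm_num) hdm
    rw [hc] at hd3
    interval_cases d <;> first | rfl | (exfalso; revert hdm hd2 hd3 hd4; decide)
  subst hd
  have := Fintype.ofFinite (G ⧸ Subgroup.normalizer ((P : Subgroup G) : Set G))
  obtain ⟨f, hf⟩ := exists_embedding hns hNt
  have hcard : Fintype.card (G ⧸ Subgroup.normalizer ((P : Subgroup G) : Set G)) = 5 := by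
    rw [← Nat.card_eq_fintype_card, ← Subgroup.index, hN]
  let e := Fintype.equivFinOfCardEq hcard
  let f' : G →* alternatingGroup (Fin 5) := (Equiv.altCongrHom e).toMonoidHom.comp f
  have hf' : Function.Injective f' := (Equiv.altCongrHom e).injective.comp hf
  refine ⟨f', ((Nat.bijective_iff_injective_and_card f').mpr ⟨hf', ?_⟩).2⟩
  have h2 : 2 * Nat.card (alternatingGroup (Fin 5)) = 120 := by
    rw [Nat.card_eq_fintype_card, two_mul_card_alternatingGroup, Fintype.card_perm,
      Fintype.card_fin]
    rfl
  omega

/-- `A₆` has no subgroup of index three, being simple of order larger than `3!`. -/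
lemma not_injective_of_card_eq_120 (hns : ¬ Group.IsSolvable G) (hc : Nat.card G = 120)
    {X : Type*} [Fintype X] [DecidableEq X] (hX : Fintype.card X = 6)
    (f : G →* alternatingGroup X) : ¬ Function.Injective f := by
  intro hf
  have hnt : Nontrivial X := Fintype.one_lt_card_iff_nontrivial.mp (by omega)
  have hA : 2 * Nat.card (alternatingGroup X) = 720 := by
    rw [Nat.card_eq_fintype_card, two_mul_card_alternatingGroup, Fintype.card_perm, hX]
    rfl
  have hsimple : IsSimpleGroup (alternatingGroup X) :=
    alternatingGroup.isSimpleGroup (by rw [Nat.card_eq_fintype_card]; omega)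
  have hAns : ¬ Group.IsSolvable (alternatingGroup X) := fun h =>
    hns (Group.isSolvable_of_isSolvable_injective hf)
  have hr : Nat.card f.range = 120 := by
    rw [← hc]
    exact (Nat.card_congr (MonoidHom.ofInjective hf).toEquiv).symm
  have hi : f.range.index = 3 := by
    have := f.range.card_mul_index
    rw [hr] at this
    omega
  have hne : f.range ≠ ⊤ := by
    intro h
    rw [h, Subgroup.index_top] at hi
    omega
  have := two_mul_card_dvd hAns hne
  rw [hA, hi] at this
  revert this
  decide

lemma card_ne_120 [Finite G] [IsSimpleGroup G] (hns : ¬ Group.IsSolvable G) :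
    Nat.card G ≠ 120 := by
  classical
  intro hc
  obtain ⟨P, d, -, hN, hNt, hdm, hd1, hd2, hd3, hd4⟩ :=
    sylow_constraint hns Nat.prime_five (a := 1) (m := 24) (by norm_num) (by rw [hc]; norm_num)
      (by norm_num)
  have hd : d = 6 := by
    have h1 : d ≤ 24 := Nat.le_of_dvd (by norm_num) hdm
    clear hd3 hN hd4
    interval_cases d <;> first | rfl | (exfalso; revert hdm hd1 hd2; decide)
  subst hd
  have := Fintype.ofFinite (G ⧸ Subgroup.normalizer ((P : Subgroup G) : Set G))
  obtain ⟨f, hf⟩ := exists_embedding hns hNt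
  exact not_injective_of_card_eq_120 hns hc
    (by rw [← Nat.card_eq_fintype_card, ← Subgroup.index, hN]) f hf

lemma normalizer_ne_top [Finite G] [IsSimpleGroup G] (hns : ¬ Group.IsSolvable G) {p : ℕ}
    (hp : p.Prime) {H : Subgroup G} (hH : Nat.card H = p) : Subgroup.normalizer (H : Set G) ≠ ⊤ := by
  intro h
  have : Fact p.Prime := ⟨hp⟩
  have hn : H.Normal := Subgroup.normalizer_eq_top_iff.mp h
  rcases hn.eq_bot_or_eq_top with rfl | rfl
  · rw [Subgroup.card_bot] at hH
    exact hp.one_lt.ne hH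
  · rw [Subgroup.card_top] at hH
    exact not_isPGroup hns (IsPGroup.of_card (p := p) (n := 1) (by rw [hH, pow_one]))

/-- The involution is central in a Sylow `2`-subgroup, which therefore normalises it. -/
lemma exists_central_involution [Finite G] {a m : ℕ} (ha : a ≠ 0) (hcard : Nat.card G = 2 ^ a * m) :
    ∃ t : G, orderOf t = 2 ∧ 2 ^ a ∣ Nat.card (Subgroup.normalizer
      (Subgroup.zpowers t : Set G)) := by
  have : Fact (Nat.Prime 2) := ⟨Nat.prime_two⟩
  obtain ⟨P⟩ : Nonempty (Sylow 2 G) := inferInstance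
  have h2 : 2 ∣ Nat.card G := hcard ▸ (dvd_pow_self 2 ha).mul_right m
  have hPn : Nontrivial P := (Subgroup.nontrivial_iff_ne_bot _).mpr (sylow_ne_bot P h2)
  have hcn := P.isPGroup'.center_nontrivial
  have h2c : 2 ∣ Nat.card (Subgroup.center P) := by
    have := (P.isPGroup'.to_subgroup (Subgroup.center P))
    obtain ⟨n, hn0, hn⟩ := this.nontrivial_iff_card.mp hcn
    rw [hn]
    exact dvd_pow_self 2 hn0.ne'
  obtain ⟨z, hz⟩ := exists_prime_orderOf_dvd_card' 2 h2c
  refine ⟨((z : P) : G), ?_, ?_⟩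
  · rw [Subgroup.orderOf_coe, Subgroup.orderOf_coe]
    exact hz
  · have hle : (P : Subgroup G) ≤ Subgroup.normalizer
        (Subgroup.zpowers ((z : P) : G) : Set G) := by
      refine le_trans ?_ (Subgroup.centralizer_le_normalizer _)
      intro x hx
      rw [Subgroup.mem_centralizer_iff]
      rintro _ ⟨k, rfl⟩
      have h := Subgroup.mem_center_iff.mp z.2 ⟨x, hx⟩
      have h' : Commute x ((z : P) : G) := congrArg Subtype.val h
      exact (h'.zpow_right k).symm.eq
    exact dvd_trans (P.pow_dvd_card_of_pow_dvd_card (hcard ▸ dvd_mul_right _ _))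
      (Subgroup.card_dvd_of_le hle)

/-- A central involution of a Sylow subgroup has a normaliser of order divisible by `4` and
of index at most `7`, which is too small for `2 * 180` to divide the factorial. -/
lemma card_ne_180 [Finite G] [IsSimpleGroup G] (hG : TransversalRich G)
    (hns : ¬ Group.IsSolvable G) : Nat.card G ≠ 180 := by
  intro hc
  obtain ⟨t, ht, hdvd⟩ := exists_central_involution (G := G) (a := 2) (m := 45) (by norm_num)
    (by rw [hc]; norm_num)
  have hH : Nat.card (Subgroup.zpowers t) = 2 := by rw [Nat.card_zpowers, ht]
  obtain ⟨k, hk, hk'⟩ := hG.prime_bound _ Nat.prime_two hH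
  have h1 := two_mul_card_dvd hns (normalizer_ne_top hns Nat.prime_two hH)
  have h2 := (Subgroup.normalizer (Subgroup.zpowers t : Set G)).card_mul_index
  generalize (Subgroup.normalizer (Subgroup.zpowers t : Set G)).index = n at *
  generalize Nat.card (Subgroup.normalizer (Subgroup.zpowers t : Set G)) = c at *
  rw [hc] at h1 h2 hk
  have hn : n ≤ 7 := by
    by_contra! hn
    nlinarith
  interval_cases n <;> first | omega | (revert h1; decide)

/-- An involution acts on seven points as an even permutation, hence with exactly three fixed
points, one of which is the base point when the involution lies in `N`. -/
lemma exists_fixed_ne [Finite G] [IsSimpleGroup G] (hns : ¬ Group.IsSolvable G) {N : Subgroup G}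
    (hi : N.index = 7) {t : G} (ht : orderOf t = 2) (htN : t ∈ N) :
    ∃ y : G ⧸ N, t • y = y ∧ y ≠ ((1 : G) : G ⧸ N) ∧
      (({x : G ⧸ N | t • x = x} \ {((1 : G) : G ⧸ N)}).ncard ≤ 2) := by
  classical
  have hNt : N ≠ ⊤ := by rintro rfl; simp at hi
  have := Fintype.ofFinite (G ⧸ N)
  obtain ⟨g, hg⟩ := exists_smul_ne hNt
  have hinj := toPermHom_injective hg
  set σ := MulAction.toPermHom G (G ⧸ N) t with hσ
  have hσ2 : σ ^ 2 = 1 := by rw [hσ, ← map_pow, ← ht, pow_orderOf_eq_one, map_one]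
  have hsign : Equiv.Perm.sign σ = 1 :=
    Equiv.Perm.mem_alternatingGroup.mp (toPermHom_mem_alternating hns t)
  have hX : Fintype.card (G ⧸ N) = 7 := by
    rw [← Nat.card_eq_fintype_card, ← Subgroup.index, hi]
  have hF : {x : G ⧸ N | t • x = x} = Function.fixedPoints σ := rfl
  have hmod := Equiv.Perm.card_fixedPoints_modEq (f := (fun x => σ x : G ⧸ N → G ⧸ N)) (p := 2)
    (n := 1) (by
      funext x
      exact congrArg (fun τ : Equiv.Perm (G ⧸ N) => τ x) hσ2)
  rw [Equiv.Perm.sign_of_pow_two_eq_one hσ2] at hsign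
  have hle : Fintype.card (Function.fixedPoints σ) ≤ 7 := hX ▸ Fintype.card_subtype_le _
  have hlt : Fintype.card (Function.fixedPoints σ) ≠ 7 := by
    intro h
    have h1 : σ = 1 := by
      have h2 : (Function.fixedPoints σ) = Set.univ := by
        rw [← set_fintype_card_eq_univ_iff, h, hX]
      ext x
      have : x ∈ Function.fixedPoints σ := h2 ▸ Set.mem_univ x
      exact this
    have h3 : t = 1 := hinj (by rw [map_one]; exact h1)
    rw [h3, orderOf_one] at ht
    omega
  have hf : Fintype.card (Function.fixedPoints σ) = 3 := by
    rw [hX] at hsign hmod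
    generalize Fintype.card (Function.fixedPoints σ) = f at *
    interval_cases f <;> first | rfl | (exfalso; revert hsign hmod hlt; decide)
  have hnc : ({x : G ⧸ N | t • x = x}).ncard = 3 := by
    rw [hF, ← Nat.card_coe_set_eq, Nat.card_eq_fintype_card, hf]
  have h1mem : ((1 : G) : G ⧸ N) ∈ {x : G ⧸ N | t • x = x} := by
    change (((t * 1 : G)) : G ⧸ N) = ((1 : G) : G ⧸ N)
    apply QuotientGroup.eq.mpr
    simpa using htN
  have hd := Set.ncard_sdiff_singleton_of_mem h1mem
  rw [hnc] at hd
  obtain ⟨y, hy⟩ := Set.nonempty_of_ncard_ne_zero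
    (s := {x : G ⧸ N | t • x = x} \ {((1 : G) : G ⧸ N)}) (by omega)
  exact ⟨y, hy.1, hy.2, by omega⟩

lemma le_normalizer_of_relIndex {R N : Subgroup G} (hRN : R ≤ N) (h0 : R.relIndex N ≠ 0)
    (h : R.relIndex N ≤ 2) : N ≤ Subgroup.normalizer (R : Set G) := by
  rw [← Subgroup.normal_subgroupOf_iff_le_normalizer hRN]
  have h12 : R.relIndex N = 1 ∨ R.relIndex N = 2 := by omega
  rcases h12 with h1 | h1
  · have : R.subgroupOf N = ⊤ := Subgroup.index_eq_one.mp h1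
    rw [this]
    infer_instance
  · exact Subgroup.normal_of_index_eq_two h1

lemma eq_or_eq_top_of_index_prime {N L : Subgroup G} (hi : N.index.Prime) (h : N ≤ L) :
    L = N ∨ L = ⊤ := by
  have h1 := Subgroup.relIndex_mul_index h
  rcases (Nat.dvd_prime hi).mp (Subgroup.index_dvd_of_le h) with h2 | h2
  · exact Or.inr (Subgroup.index_eq_one.mp h2)
  · left
    rw [h2] at h1
    have h3 : N.relIndex L = 1 := by
      have := hi.pos
      nlinarith
    exact le_antisymm (Subgroup.relIndex_eq_one.mp h3) h

/-- A central involution `t` of a Sylow `2`-subgroup has centraliser `N` of index `7` because of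
the orbit bound. Apart from the base point, `t` fixes two points of `G ⧸ N`, permuted by `N`;
if `M` is the stabiliser of one of them, `N ⊓ M` has index at most `2` in both `N` and `M`, so
it is normalised by both, whereas `N` is maximal and not normal. -/
lemma card_ne_168 [Finite G] [IsSimpleGroup G] (hG : TransversalRich G)
    (hns : ¬ Group.IsSolvable G) : Nat.card G ≠ 168 := by
  intro hc
  obtain ⟨t, ht, hdvd⟩ := exists_central_involution (G := G) (a := 3) (m := 21) (by norm_num)
    (by rw [hc]; norm_num)
  have hH : Nat.card (Subgroup.zpowers t) = 2 := by rw [Nat.card_zpowers, ht]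
  obtain ⟨k, hk, hk'⟩ := hG.prime_bound _ Nat.prime_two hH
  have hNt := normalizer_ne_top hns Nat.prime_two hH
  have h1 := two_mul_card_dvd hns hNt
  have h2 := (Subgroup.normalizer (Subgroup.zpowers t : Set G)).card_mul_index
  have hcomm : ∀ g ∈ Subgroup.normalizer (Subgroup.zpowers t : Set G), g * t = t * g := by
    intro g hg
    have h3 : g * t * g⁻¹ ∈ Subgroup.zpowers t :=
      (Subgroup.mem_normalizer_iff.mp hg t).mp (Subgroup.mem_zpowers t)
    obtain ⟨z, hz⟩ := h3
    have hz : t ^ z = g * t * g⁻¹ := hz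
    rw [← zpow_mod_orderOf, ht] at hz
    rcases Int.emod_two_eq_zero_or_one z with h4 | h4
    · rw [Nat.cast_ofNat, h4, zpow_zero] at hz
      have : t = 1 := by
        have h5 := congrArg (fun x => g⁻¹ * x * g) hz
        simpa [mul_assoc] using h5.symm
      rw [this, orderOf_one] at ht
      omega
    · rw [Nat.cast_ofNat, h4, zpow_one] at hz
      rw [eq_mul_inv_iff_mul_eq] at hz
      exact hz.symm
  have htN : t ∈ Subgroup.normalizer (Subgroup.zpowers t : Set G) :=
    Subgroup.le_normalizer (Subgroup.mem_zpowers t)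
  generalize Subgroup.normalizer (Subgroup.zpowers t : Set G) = N at *
  rw [hc] at h1 h2 hk
  have hi : N.index = 7 := by
    generalize N.index = n at *
    generalize Nat.card N = c at *
    have hn : n ≤ 14 := by
      by_contra! hn
      nlinarith
    interval_cases n <;> first | omega | (exfalso; revert h1; decide)
  have hNc : Nat.card N = 24 := by rw [hi] at h2; omega
  obtain ⟨y, hty, hy1, hcardF⟩ := exists_fixed_ne hns hi ht htN
  have hN1 : stabilizer G ((1 : G) : G ⧸ N) = N := by
    ext g
    rw [mem_stabilizer_iff]
    change (((g * 1 : G)) : G ⧸ N) = ((1 : G) : G ⧸ N) ↔ _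
    rw [eq_comm, QuotientGroup.eq]
    simp
  set M := stabilizer G y with hM
  have hMc : Nat.card M = 24 := by
    have hMi : M.index = 7 := by
      rw [hM, index_stabilizer, orbit_eq_univ, Set.ncard_univ, ← Subgroup.index, hi]
    have h3 := M.card_mul_index
    rw [hMi, hc] at h3
    omega
  -- `N` permutes the points fixed by `t` other than its own, and there are two of these
  have hrel : (N ⊓ M).relIndex N ≤ 2 := by
    have h3 : (stabilizer N y).index ≤ 2 := by
      rw [index_stabilizer]
      refine le_trans (Set.ncard_le_ncard ?_ (Set.toFinite _)) hcardF
      rintro _ ⟨n, rfl⟩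
      refine ⟨?_, ?_⟩
      · change t • ((n : G) • y) = (n : G) • y
        rw [smul_smul, ← hcomm n n.2, ← smul_smul, hty]
      · intro h4
        have h5 : (n : G) • y = ((1 : G) : G ⧸ N) := h4
        have h6 : (n : G)⁻¹ • ((1 : G) : G ⧸ N) = ((1 : G) : G ⧸ N) := by
          rw [← mem_stabilizer_iff, hN1]
          exact N.inv_mem n.2
        apply hy1
        rw [← h6, ← h5, inv_smul_smul]
    have h4 : (N ⊓ M).subgroupOf N = stabilizer N y := by
      ext n
      simp only [Subgroup.mem_subgroupOf, Subgroup.mem_inf, n.2, true_and]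
      rfl
    rw [Subgroup.relIndex, h4]
    exact h3
  have hR : Nat.card (N ⊓ M : Subgroup G) * (N ⊓ M).relIndex N = 24 := by
    rw [← Subgroup.relIndex_bot_left, Subgroup.relIndex_mul_relIndex _ _ _ bot_le inf_le_left,
      Subgroup.relIndex_bot_left, hNc]
  have hR' : Nat.card (N ⊓ M : Subgroup G) * (N ⊓ M).relIndex M = 24 := by
    rw [← Subgroup.relIndex_bot_left, Subgroup.relIndex_mul_relIndex _ _ _ bot_le inf_le_right,
      Subgroup.relIndex_bot_left, hMc]
  have hrel' : (N ⊓ M).relIndex M = (N ⊓ M).relIndex N :=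
    Nat.eq_of_mul_eq_mul_left Nat.card_pos (hR'.trans hR.symm)
  have h0 : (N ⊓ M).relIndex N ≠ 0 := by
    intro h
    rw [h] at hR
    omega
  have hLN := le_normalizer_of_relIndex inf_le_left h0 hrel
  have hLM := le_normalizer_of_relIndex inf_le_right (hrel' ▸ h0) (hrel' ▸ hrel)
  have hprime : N.index.Prime := by rw [hi]; norm_num
  rcases eq_or_eq_top_of_index_prime hprime hLN with h | h
  · -- here `M = N`, so `y` is fixed by `N`
    rw [h] at hLM
    have hMN : M = N := Subgroup.eq_of_le_of_card_ge hLM (by omega)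
    obtain ⟨g, hgy⟩ := QuotientGroup.mk_surjective y
    have hgN : g ∈ Subgroup.normalizer (N : Set G) := by
      rw [← Sylow.mem_fixedPoints_mul_left_cosets_iff_mem_normalizer]
      intro n
      have : (n : G) ∈ M := by
        rw [hMN]
        exact n.2
      have h5 : (n : G) • y = y := mem_stabilizer_iff.mp this
      rw [← hgy] at h5
      exact h5
    rcases eq_or_eq_top_of_index_prime hprime (Subgroup.le_normalizer (H := N)) with h' | h'
    · rw [h'] at hgN
      apply hy1
      rw [← hgy]
      exact (QuotientGroup.eq.mpr (by simpa using hgN)).symm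
    · have hn : N.Normal := Subgroup.normalizer_eq_top_iff.mp h'
      rcases hn.eq_bot_or_eq_top with h3 | h3
      · rw [h3, Subgroup.card_bot] at hNc
        omega
      · exact hNt h3
  · have hn : (N ⊓ M).Normal := Subgroup.normalizer_eq_top_iff.mp h
    rcases hn.eq_bot_or_eq_top with h3 | h3
    · rw [h3] at hR hrel
      rw [Subgroup.card_bot] at hR
      omega
    · exact hNt (top_le_iff.mp (h3 ▸ inf_le_left))

end Orders

/-! ### Reduction to simple groups -/

section Main

lemma exists_card_eq_prime {G : Type*} [Group G] [Finite G] {p : ℕ} (hp : p.Prime)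
    (hdvd : p ∣ Nat.card G) : ∃ H : Subgroup G, Nat.card H = p := by
  have : Fact p.Prime := ⟨hp⟩
  obtain ⟨x, hx⟩ := exists_prime_orderOf_dvd_card' p hdvd
  exact ⟨Subgroup.zpowers x, by rw [Nat.card_zpowers, hx]⟩

/-- A nonsolvable simple transversal-rich group cannot have its least prime divisor `p` at
least `7`: the normaliser of a subgroup of order `p` would have order `p ^ 2`, forcing
`|G| = p ^ 3`, or order `p`, contradicting Burnside's transfer theorem. -/
lemma minFac_lt_seven {G : Type*} [Group G] [Finite G] [IsSimpleGroup G]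
    (hG : TransversalRich G) (hns : ¬ Group.IsSolvable G) : (Nat.card G).minFac < 7 := by
  by_contra! h7
  have hG1 : Nat.card G ≠ 1 := Finite.one_lt_card.ne'
  have hp := Nat.minFac_prime hG1
  have hpG := Nat.minFac_dvd (Nat.card G)
  have hmin : ∀ q, 2 ≤ q → q ∣ Nat.card G → (Nat.card G).minFac ≤ q :=
    fun q => Nat.minFac_le_of_dvd
  generalize (Nat.card G).minFac = p at *
  obtain ⟨H, hH⟩ := exists_card_eq_prime hp hpG
  obtain ⟨k, hk, hk'⟩ := hG.prime_bound H hp hH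
  have hNt := normalizer_ne_top hns hp hH
  have hcN := (Subgroup.normalizer (H : Set G)).card_mul_index
  have hHN : H ≤ Subgroup.normalizer (H : Set G) := Subgroup.le_normalizer
  have hk6 : k ≤ 6 := by
    have h1 : k * 6 ≤ k * (p - 1) := Nat.mul_le_mul_left k (by omega)
    omega
  have hk0 : k ≠ 0 := by
    rintro rfl
    exact hNt (Subgroup.eq_top_of_card_eq _ (by omega))
  have hpN : p ∣ Nat.card (Subgroup.normalizer (H : Set G)) := by
    rw [← hH]
    exact Subgroup.card_dvd_of_le hHN
  have hNdvd : Nat.card (Subgroup.normalizer (H : Set G)) ∣ p ^ 2 := by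
    have hcop : Nat.Coprime (Nat.card (Subgroup.normalizer (H : Set G))) k := by
      refine Nat.Coprime.symm (Nat.coprime_of_dvd fun q hq hqk hqN => ?_)
      have h1 := hmin q hq.two_le (hqN.trans (Subgroup.card_subgroup_dvd_card _))
      have h2 := Nat.le_of_dvd (Nat.pos_of_ne_zero hk0) hqk
      omega
    refine hcop.dvd_of_dvd_mul_left ?_
    exact (Nat.dvd_add_right (dvd_refl _)).mp (hk ▸ Subgroup.card_subgroup_dvd_card _)
  have : Fact p.Prime := ⟨hp⟩
  obtain ⟨e, he, hNe⟩ := (Nat.dvd_prime_pow hp).mp hNdvd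
  interval_cases e
  · rw [hNe, pow_zero] at hpN
    exact hp.one_lt.ne' (Nat.dvd_one.mp hpN)
  · rw [hNe, pow_one] at hk
    have hHN' : Subgroup.normalizer (H : Set G) = H :=
      (Subgroup.eq_of_le_of_card_ge hHN (by rw [hNe, hH, pow_one])).symm
    have hfac : (Nat.card G).factorization p = 1 := by
      have hcard : Nat.card G = p ^ 1 * (1 + k * p) := by rw [hk]; ring
      have hnd : ¬ p ∣ 1 + k * p := fun h =>
        hp.one_lt.ne' (Nat.dvd_one.mp ((Nat.dvd_add_left (dvd_mul_left p k)).mp h))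
      rw [hcard, Nat.factorization_mul (by positivity) (by omega),
        Nat.Prime.factorization_pow hp]
      simp [Nat.factorization_eq_zero_of_not_dvd hnd]
    let P : Sylow p G := Sylow.ofCard H (by rw [hfac, hH, pow_one])
    have hPH : (P : Subgroup G) = H := rfl
    refine sylow_burnside hns P hpG ?_
    rw [hPH, hHN']
    have := isCyclic_of_prime_card hH
    have hcomm : ∀ x y : H, x * y = y * x := isMulCommutative_iff.mp IsCyclic.isMulCommutative
    intro x hx y hy
    exact congrArg Subtype.val (hcomm ⟨y, hy⟩ ⟨x, hx⟩)
  · rw [hNe] at hk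
    have hcard : Nat.card G = p ^ 2 * (k + 1) := by rw [hk]; ring
    have h1 := hmin (k + 1) (by omega) (hcard ▸ dvd_mul_left _ _)
    have h2 : k + 1 = p := by omega
    exact not_isPGroup hns (IsPGroup.of_card (p := p) (n := 3) (by rw [hcard, h2]; ring))

/-- If the least prime divisor of `|G|` is at most `5`, the orbit bound for a subgroup of
that order bounds `|G|`, and Sylow-type arithmetic leaves order `60` only. -/
lemma exists_surjective_of_simple {G : Type*} [Group G] [Finite G] [IsSimpleGroup G]
    (hG : TransversalRich G) (hns : ¬ Group.IsSolvable G) :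
    ∃ φ : G →* alternatingGroup (Fin 5), Function.Surjective φ := by
  have hG1 : Nat.card G ≠ 1 := Finite.one_lt_card.ne'
  have hG0 : 0 < Nat.card G := Nat.card_pos
  have h7 := minFac_lt_seven hG hns
  have hp := Nat.minFac_prime hG1
  have hpG := Nat.minFac_dvd (Nat.card G)
  have hmin : ∀ q, 2 ≤ q → q ∣ Nat.card G → (Nat.card G).minFac ≤ q :=
    fun q => Nat.minFac_le_of_dvd
  generalize (Nat.card G).minFac = p at *
  obtain ⟨H, hH⟩ := exists_card_eq_prime hp hpG
  obtain ⟨k, hk, hk'⟩ := hG.prime_bound H hp hH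
  have hNt := normalizer_ne_top hns hp hH
  have hcN := (Subgroup.normalizer (H : Set G)).card_mul_index
  have hfac := two_mul_card_dvd hns hNt
  have hn2 : 2 ≤ (Subgroup.normalizer (H : Set G)).index := by
    have h0 : (Subgroup.normalizer (H : Set G)).index ≠ 0 := Subgroup.index_ne_zero_of_finite
    have h1 : (Subgroup.normalizer (H : Set G)).index ≠ 1 := by rwa [Ne, Subgroup.index_eq_one]
    omega
  have hnp := hmin _ hn2 (Subgroup.index_dvd_card _)
  have hexcl := not_sylowExcluded hns
  have hodd : p ≠ 2 → Nat.card G % 2 = 1 := by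
    intro h2
    by_contra h
    have := hmin 2 le_rfl (Nat.dvd_of_mod_eq_zero (by omega))
    have := hp.two_le
    omega
  by_cases h2 : p = 2
  · have hlt : Nat.card G < 200 := by
      subst h2
      generalize (Subgroup.normalizer (H : Set G)).index = n at *
      by_cases hn : n ≤ 4
      · have h3 := (Nat.le_of_dvd (Nat.factorial_pos _) hfac).trans (Nat.factorial_le hn)
        have h4 : Nat.factorial 4 = 24 := rfl
        omega
      · have h3 : Nat.card (Subgroup.normalizer (H : Set G)) * 5 ≤ Nat.card G :=
          hcN ▸ Nat.mul_le_mul_left _ (by omega)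
        omega
    rcases even_orders _ hlt (Nat.mod_eq_zero_of_dvd (h2 ▸ hpG)) hG0 with h | h | h | h | h
    · exact absurd h hexcl
    · exact exists_surjective_of_card_eq_sixty hns h
    · exact absurd h (card_ne_120 hns)
    · exact absurd h (card_ne_168 hG hns)
    · exact absurd h (card_ne_180 hG hns)
  · exfalso
    have h3 : Nat.card (Subgroup.normalizer (H : Set G)) * p ≤ Nat.card G :=
      hcN ▸ Nat.mul_le_mul_left _ hnp
    have h35 : p = 3 ∨ p = 5 := by
      have := hp.two_le
      interval_cases p
      · omega
      · omega
      · exact absurd hp (by norm_num)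
      · omega
      · exact absurd hp (by norm_num)
    refine hexcl (odd_orders _ ?_ (hodd h2) ?_)
    · rcases h35 with rfl | rfl <;> omega
    · rcases h35 with rfl | rfl <;> omega

lemma HasSectionIsomorphicTo.of_subgroup {G X : Type*} [Group G] [Group X] {K : Subgroup G}
    (h : HasSectionIsomorphicTo K X) : HasSectionIsomorphicTo G X := by
  obtain ⟨H, φ, hφ⟩ := h
  let e := H.equivMapOfInjective K.subtype K.subtype_injective
  exact ⟨H.map K.subtype, φ.comp e.symm.toMonoidHom, hφ.comp e.symm.surjective⟩

lemma HasSectionIsomorphicTo.of_quotient {G X : Type*} [Group G] [Group X] {N : Subgroup G}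
    [N.Normal] (h : HasSectionIsomorphicTo (G ⧸ N) X) : HasSectionIsomorphicTo G X := by
  obtain ⟨H, φ, hφ⟩ := h
  refine ⟨H.comap (QuotientGroup.mk' N), φ.comp ((QuotientGroup.mk' N).subgroupComap H),
    hφ.comp ?_⟩
  exact (QuotientGroup.mk' N).subgroupComap_surjective_of_surjective H
    (QuotientGroup.mk'_surjective N)

/-- Induction on the order: a proper nontrivial normal subgroup `N` makes `N` or `G ⧸ N` a smaller
nonsolvable group inheriting the hypothesis, and otherwise `G` is simple. -/
lemma hasSection_of_transversalRich (n : ℕ) : ∀ (G : Type*) [Group G] [Finite G],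
    Nat.card G = n → TransversalRich G → ¬ Group.IsSolvable G →
      HasSectionIsomorphicTo G (alternatingGroup (Fin 5)) := by
  induction n using Nat.strong_induction_on with
  | _ n ih =>
  intro G _ _ hn hG hns
  by_cases hs : ∃ N : Subgroup G, N.Normal ∧ N ≠ ⊥ ∧ N ≠ ⊤
  · obtain ⟨N, hN, hbot, htop⟩ := hs
    by_cases hNs : Group.IsSolvable N
    · have hQs : ¬ Group.IsSolvable (G ⧸ N) := fun hQ =>
        hns (Group.isSolvable_of_ker_le_range N.subtype (QuotientGroup.mk' N) (by simp))
      refine (ih _ ?_ (G ⧸ N) rfl (hG.quotient N) hQs).of_quotient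
      have h1 := Subgroup.card_eq_card_quotient_mul_card_subgroup N
      have h2 := Subgroup.one_lt_card_iff_ne_bot N |>.mpr hbot
      have h3 : 0 < Nat.card (G ⧸ N) := Nat.card_pos
      rw [← hn, h1]
      exact (Nat.lt_mul_iff_one_lt_right h3).mpr h2
    · refine (ih _ ?_ N rfl (hG.subgroup N) hNs).of_subgroup
      rw [← hn]
      exact lt_of_le_of_ne (Subgroup.card_le_card_group N)
        fun h => htop (Subgroup.eq_top_of_card_eq N h)
  · push Not at hs
    have hnt : Nontrivial G := by
      by_contra h
      rw [not_nontrivial_iff_subsingleton] at h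
      exact hns inferInstance
    have : IsSimpleGroup G := ⟨fun N hN => or_iff_not_imp_left.mpr (hs N hN)⟩
    obtain ⟨φ, hφ⟩ := exists_surjective_of_simple hG hns
    let e : (⊤ : Subgroup G) ≃* G := Subgroup.topEquiv
    exact ⟨⊤, φ.comp e.toMonoidHom, hφ.comp e.surjective⟩

end Main

theorem stmt13 (G : Type*) [Group G] [Finite G] (h : tp G > (1 / 2 : ℚ) ^ 40) :
    IsSolvable G ∨ HasSectionIsomorphicTo G (alternatingGroup (Fin 5)) := by
  have hG : TransversalRich G := by
    intro H
    refine lt_of_lt_of_le h (le_trans ?_ (transProb_le H))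
    exact Finset.inf'_le (fun K : Subgroup G => transProb K K) (@Finset.mem_univ _ (_) H)
  by_cases hs : Group.IsSolvable G
  · exact Or.inl hs
  · exact Or.inr (hasSection_of_transversalRich _ G rfl hG hs)
end
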